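/- arXiv:2510.22509 — 4 statements merged into one kernel-verified Lean document; each statement's English description precedes it below -/
import Mathlib

section
/- For every α with 0 < α < 1, Σ_{n=2}^∞ (−1)^{n−1}/(α n² + (1 − α) n) = (−1 + H(α) + ln 2)/(1 − α), where H(α) = Σ_{n=0}^∞ (−1)^n/(n + 1 + 1/α); moreover this quantity is negative. -/
/-!
Partial fractions give, for `n ≥ 2`,
`1 / (α n² + (1 - α) n) = (1 / n - 1 / (n - 1 + 1 / α)) / (1 - α)`.
Both alternating series on the right converge by Leibniz's test: the first one is a tail of the
alternating harmonic series, whose sum is `log 2` by Abel's limit theorem, and the second one is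
`H(α)`. The series on the left converges absolutely, so its `tsum` is the limit of its partial
sums. Its terms alternate and strictly decrease in absolute value, the first one being negative,
so Leibniz's estimate makes the sum negative.
-/

open Filter Topology in
/-- The alternating harmonic series `∑ (-1)ⁿ / (n + 1)` converges to `log 2`. -/
lemma tendsto_alternating_harmonic :
    Tendsto (fun N => ∑ n ∈ Finset.range N, (-1 : ℝ) ^ n / ((n : ℝ) + 1)) atTop
      (𝓝 (Real.log 2)) := by
  have hanti : Antitone fun n : ℕ => 1 / ((n : ℝ) + 1) := fun a b hab => by
    have : (a : ℝ) ≤ b := by exact_mod_cast hab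
    dsimp only
    gcongr
  obtain ⟨l, hl⟩ := hanti.tendsto_alternating_series_of_tendsto_zero
    tendsto_one_div_add_atTop_nhds_zero_nat
  simp only [mul_one_div] at hl
  have habel := Real.tendsto_tsum_powerSeries_nhdsWithin_lt hl
  -- The factor `x` turns the power series into that of `log (1 + x)`.
  have hlog : Tendsto (fun x : ℝ => (∑' n : ℕ, (-1 : ℝ) ^ n / ((n : ℝ) + 1) * x ^ n) * x)
      (𝓝[<] 1) (𝓝 (Real.log 2)) := by
    have hcont : Tendsto (fun x : ℝ => Real.log (1 + x)) (𝓝[<] 1) (𝓝 (Real.log 2)) := by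
      have h : ContinuousAt (fun x : ℝ => Real.log (1 + x)) 1 :=
        ContinuousAt.log (by fun_prop) (by norm_num)
      have h' := h.tendsto
      norm_num at h'
      exact h'.mono_left nhdsWithin_le_nhds
    refine hcont.congr' ?_
    filter_upwards [Ioo_mem_nhdsLT (show (0 : ℝ) < 1 by norm_num)] with x hx
    have hs := Real.hasSum_pow_div_log_of_abs_lt_one (x := -x)
      (by rw [abs_neg, abs_of_pos hx.1]; exact hx.2)
    have h := hs.neg.tsum_eq
    rw [neg_neg, sub_neg_eq_add] at h
    rw [← tsum_mul_right, ← h]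
    refine tsum_congr fun n => ?_
    rw [neg_pow x, pow_succ, pow_succ]
    ring
  have hmul := habel.mul (tendsto_id.mono_left (nhdsWithin_le_nhds (a := (1 : ℝ)) (s := Set.Iio 1)))
  simp only [id, mul_one] at hmul
  rwa [tendsto_nhds_unique hmul hlog] at hl

open Filter Topology in
theorem stmt14 (α : ℝ) (hα : α ∈ Set.Ioo (0 : ℝ) 1) :
    ∃ H : ℝ,
      Filter.Tendsto
        (fun N => ∑ n ∈ Finset.range N, (-1 : ℝ) ^ n / ((n : ℝ) + 1 + 1 / α))
        Filter.atTop (nhds H) ∧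
      (∑' n : ℕ, (-1 : ℝ) ^ (n + 1) / (α * ((n : ℝ) + 2) ^ 2 + (1 - α) * ((n : ℝ) + 2)))
        = (-1 + H + Real.log 2) / (1 - α) ∧
      (∑' n : ℕ, (-1 : ℝ) ^ (n + 1) / (α * ((n : ℝ) + 2) ^ 2 + (1 - α) * ((n : ℝ) + 2)))
        < 0 := by
  obtain ⟨h0, h1⟩ := hα
  have h1' : 0 < 1 - α := sub_pos.mpr h1
  have hanti : Antitone fun n : ℕ => 1 / ((n : ℝ) + 1 + 1 / α) := fun a b hab => by
    have : (a : ℝ) ≤ b := by exact_mod_cast hab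
    dsimp only
    gcongr
  have hzero : Tendsto (fun n : ℕ => 1 / ((n : ℝ) + 1 + 1 / α)) atTop (𝓝 0) := by
    refine squeeze_zero (fun n => by positivity) (fun n => ?_)
      (tendsto_one_div_add_atTop_nhds_zero_nat (𝕜 := ℝ))
    have : 0 < 1 / α := by positivity
    exact one_div_le_one_div_of_le (by positivity) (by linarith)
  obtain ⟨H, hH⟩ := hanti.tendsto_alternating_series_of_tendsto_zero hzero
  simp only [mul_one_div] at hH
  set D : ℕ → ℝ := fun n => α * ((n : ℝ) + 2) ^ 2 + (1 - α) * ((n : ℝ) + 2) with hD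
  have hDpos : ∀ n, 0 < D n := fun n => by simp only [hD]; positivity
  have hsum : Summable fun n : ℕ => (-1 : ℝ) ^ (n + 1) / D n := by
    have hsq : Summable fun n : ℕ => α⁻¹ * (1 / ((n + 2 : ℕ) : ℝ) ^ 2) :=
      ((summable_nat_add_iff 2).mpr
        (Real.summable_one_div_nat_pow.mpr one_lt_two)).mul_left _
    refine hsq.of_norm_bounded fun n => ?_
    rw [norm_div, norm_pow, norm_neg, norm_one, one_pow, Real.norm_of_nonneg (hDpos n).le,
      ← one_div, one_div_mul_one_div]
    push_cast
    have : 0 ≤ (1 - α) * ((n : ℝ) + 2) := by positivity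
    exact one_div_le_one_div_of_le (by positivity) (by simp only [hD]; linarith)
  have hpart := hsum.hasSum.tendsto_sum_nat
  refine ⟨H, hH, ?_, ?_⟩
  · have htail := ((tendsto_add_atTop_iff_nat 1).mpr tendsto_alternating_harmonic).sub_const 1
    have hlim := (htail.add hH).div_const (1 - α)
    have hval : Real.log 2 - 1 + H = -1 + H + Real.log 2 := by ring
    rw [hval] at hlim
    refine tendsto_nhds_unique hpart (hlim.congr fun N => ?_)
    rw [Finset.sum_range_succ', Nat.cast_zero, pow_zero, zero_add, div_one, add_sub_cancel_right,
      ← Finset.sum_add_distrib, Finset.sum_div]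
    refine Finset.sum_congr rfl fun n _ => ?_
    have hDn : D n = ((n : ℝ) + 2) * (α * (n + 1) + 1) := by simp only [hD]; ring
    have hn1 : α * ((n : ℝ) + 1) + 1 ≠ 0 := by positivity
    have hn2 : (n : ℝ) + 2 ≠ 0 := by positivity
    have hfrac : (n : ℝ) + 1 + 1 / α = (α * (n + 1) + 1) / α := by field_simp
    have hcast : (((n + 1 : ℕ) : ℝ)) + 1 = n + 2 := by push_cast; ring
    rw [hDn, hfrac, hcast, pow_succ]
    have := h1'.ne'
    field_simp
    ring
  · have hDanti : Antitone fun n => 1 / D n := fun a b hab => by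
      have : (a : ℝ) ≤ b := by exact_mod_cast hab
      refine one_div_le_one_div_of_le (hDpos a) ?_
      simp only [hD]
      gcongr
    have hneg : Tendsto (fun N => ∑ n ∈ Finset.range N, (-1 : ℝ) ^ n * (1 / D n)) atTop
        (𝓝 (-∑' n : ℕ, (-1 : ℝ) ^ (n + 1) / D n)) := by
      refine hpart.neg.congr fun N => ?_
      rw [← Finset.sum_neg_distrib]
      refine Finset.sum_congr rfl fun n _ => ?_
      rw [pow_succ]
      ring
    have hle := hDanti.alternating_series_le_tendsto hneg 1
    have hlt : 1 / D 1 < 1 / D 0 :=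
      one_div_lt_one_div_of_lt (hDpos 0) (by simp only [hD]; push_cast; nlinarith)
    simp only [mul_one, Finset.sum_range_succ, Finset.sum_range_zero] at hle
    linarith
end

section
/- The function H(α) = Σ_{n=0}^∞ (−1)^n/(n + 1 + 1/α) is differentiable on (0, 1) with 0 < H′(α) < 1/(1 + α)² < 1 for every 0 < α < 1, and consequently G(α) = H(α) + ln 2 − α is strictly decreasing on (0, 1) with G(α) > 0 for all 0 < α < 1; that is, α < H(α) + ln 2 for every 0 < α < 1. -/
/-!
Write the `n`-th term as `(-1)ⁿ α / (α (n + 1) + 1)`; its derivative is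
`(-1)ⁿ / (α (n + 1) + 1)²`. On `(δ, 1)` with `δ > 0` the differentiated series is dominated by
`Σ 1 / (δ (n + 1))²`, so it converges uniformly and `H` may be differentiated term by term
(`hasDerivAt_lerch`). For fixed `α` the moduli of the terms of `H'(α)` decrease strictly, so `H'(α)`
lies strictly between `0` and its first term `1 / (1 + α)²` (`lerchDeriv_pos`, `lerchDeriv_lt`).
Hence `H(α) - α` is strictly decreasing.

For positivity of `G`, the even partial sums `S_{2N}(β)` bound `H(β)` from below, and
`H(β) - β < H(α) - α` for `α < β < 1`. Letting `β → 1⁻` gives `S_{2N}(1) ≤ H(α) - α + 1`. Now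
`S_{2N}(1) = 1 - (h_{2N+1} - h_N)` with `h` the harmonic numbers, and since `h_n - log n` is
antitone, `S_{2N}(1) ≥ 1 - log ((2N + 1) / N) → 1 - log 2`. So `G ≥ 0`, and strict monotonicity
upgrades this to `G > 0`.
-/

open Filter Topology

/-- The modulus of the `n`-th term of the termwise derivative of `H` at `x`. -/
noncomputable def lerchDerivTerm (x : ℝ) (n : ℕ) : ℝ := 1 / (x * ((n : ℝ) + 1) + 1) ^ 2

lemma lerchDerivTerm_strictAnti {x : ℝ} (hx : 0 < x) : StrictAnti (lerchDerivTerm x) := by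
  refine strictAnti_nat_of_succ_lt fun n => ?_
  unfold lerchDerivTerm
  push_cast
  gcongr
  linarith

lemma lerchDerivTerm_le {d x : ℝ} (hd : 0 < d) (hx : d < x) (n : ℕ) :
    lerchDerivTerm x n ≤ 1 / d ^ 2 * (1 / ((n : ℝ) + 1) ^ 2) := by
  rw [one_div_mul_one_div, ← mul_pow, lerchDerivTerm]
  have h : d * ((n : ℝ) + 1) ≤ x * ((n : ℝ) + 1) := by gcongr
  gcongr
  linarith

lemma summable_majorant (d : ℝ) :
    Summable fun n : ℕ => 1 / d ^ 2 * (1 / ((n : ℝ) + 1) ^ 2) := by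
  apply Summable.mul_left
  have h := (summable_nat_add_iff 1).2 (Real.summable_one_div_nat_pow.2 (one_lt_two))
  simpa using h

lemma norm_lerch_le {d x : ℝ} (hd : 0 < d) (hx : d < x) (n : ℕ) :
    ‖(-1 : ℝ) ^ n * lerchDerivTerm x n‖ ≤ 1 / d ^ 2 * (1 / ((n : ℝ) + 1) ^ 2) := by
  have h0 : 0 ≤ lerchDerivTerm x n := by unfold lerchDerivTerm; positivity
  simpa [abs_of_nonneg h0] using lerchDerivTerm_le hd hx n

lemma lerchDeriv_tendsto {x : ℝ} (hx : 0 < x) :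
    Tendsto (fun N => ∑ n ∈ Finset.range N, (-1 : ℝ) ^ n * lerchDerivTerm x n) atTop
      (𝓝 (∑' n, (-1 : ℝ) ^ n * lerchDerivTerm x n)) :=
  (Summable.of_norm_bounded (summable_majorant (x / 2))
    (norm_lerch_le (half_pos hx) (half_lt_self hx))).hasSum.tendsto_sum_nat

lemma lerchDeriv_pos {x : ℝ} (hx : 0 < x) : 0 < ∑' n, (-1 : ℝ) ^ n * lerchDerivTerm x n := by
  have ha := lerchDerivTerm_strictAnti hx
  have h := ha.antitone.alternating_series_le_tendsto (lerchDeriv_tendsto hx) 1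
  have h01 := ha (show 0 < 1 by norm_num)
  simp [Finset.sum_range_succ] at h
  linarith

lemma lerchDeriv_lt {x : ℝ} (hx : 0 < x) :
    ∑' n, (-1 : ℝ) ^ n * lerchDerivTerm x n < 1 / (1 + x) ^ 2 := by
  have ha := lerchDerivTerm_strictAnti hx
  have h := ha.antitone.tendsto_le_alternating_series (lerchDeriv_tendsto hx) 1
  have h12 := ha (show 1 < 2 by norm_num)
  have h0 : lerchDerivTerm x 0 = 1 / (1 + x) ^ 2 := by simp [lerchDerivTerm, add_comm]
  simp only [Nat.reduceMul, Nat.reduceAdd, Finset.sum_range_succ, Finset.sum_range_zero] at h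
  rw [← h0]
  linarith

lemma hasDerivAt_lerch_term {x : ℝ} (hx : 0 < x) (n : ℕ) :
    HasDerivAt (fun y : ℝ => (-1 : ℝ) ^ n / ((n : ℝ) + 1 + 1 / y))
      ((-1 : ℝ) ^ n * lerchDerivTerm x n) x := by
  have hden : (n : ℝ) + 1 + 1 / x ≠ 0 := by positivity
  have h1 : HasDerivAt (fun y : ℝ => (n : ℝ) + 1 + 1 / y) (-(x ^ 2)⁻¹) x := by
    simpa using (hasDerivAt_inv hx.ne').const_add ((n : ℝ) + 1)
  have h2 := (h1.inv hden).const_mul ((-1 : ℝ) ^ n)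
  simp only [div_eq_mul_inv (_ ^ _)]
  refine h2.congr_deriv ?_
  have h3 : x * ((n : ℝ) + 1) + 1 ≠ 0 := by positivity
  unfold lerchDerivTerm
  congr 1
  rw [show (n : ℝ) + 1 + 1 / x = (x * ((n : ℝ) + 1) + 1) / x by field_simp]
  field_simp

lemma hasDerivAt_lerch {H : ℝ → ℝ}
    (hH : ∀ α ∈ Set.Ioo (0 : ℝ) 1,
      Tendsto (fun N => ∑ n ∈ Finset.range N, (-1 : ℝ) ^ n / ((n : ℝ) + 1 + 1 / α))
        atTop (𝓝 (H α))) {α : ℝ} (hα : α ∈ Set.Ioo (0 : ℝ) 1) :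
    HasDerivAt H (∑' n, (-1 : ℝ) ^ n * lerchDerivTerm α n) α := by
  have hd : 0 < α / 2 := half_pos hα.1
  refine hasDerivAt_of_tendstoUniformlyOn (l := atTop) (s := Set.Ioo (α / 2) 1) isOpen_Ioo
    (tendstoUniformlyOn_tsum_nat (summable_majorant (α / 2))
      fun n x hx => norm_lerch_le hd hx.1 n)
    (Eventually.of_forall fun N x hx => ?_) (fun x hx => hH x ⟨hd.trans hx.1, hx.2⟩)
    ⟨half_lt_self hα.1, hα.2⟩
  exact HasDerivAt.fun_sum fun n _ => hasDerivAt_lerch_term (hd.trans hx.1) n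

lemma sum_range_two_mul_eq_harmonic (N : ℕ) :
    ∑ n ∈ Finset.range (2 * N), (-1 : ℝ) ^ n / ((n : ℝ) + 1 + 1 / 1) =
      1 - harmonic (2 * N + 1) + harmonic N := by
  induction N with
  | zero => simp [harmonic_succ]
  | succ N ih =>
    rw [show 2 * (N + 1) = 2 * N + 1 + 1 by ring, Finset.sum_range_succ, Finset.sum_range_succ,
      ih, harmonic_succ (2 * N + 1 + 1), harmonic_succ (2 * N + 1), harmonic_succ N]
    have hs : (-1 : ℝ) ^ (2 * N) = 1 := by simp
    rw [pow_succ, hs]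
    push_cast
    have h1 : (N : ℝ) + 1 ≠ 0 := by positivity
    have h2 : 2 * (N : ℝ) + 1 + 1 ≠ 0 := by positivity
    have h3 : 2 * (N : ℝ) + 1 + 1 + 1 ≠ 0 := by positivity
    have h4 : 2 * (N : ℝ) + 1 + 1 / 1 ≠ 0 := by positivity
    have h5 : 2 * (N : ℝ) + 1 + 1 + 1 / 1 ≠ 0 := by positivity
    have h6 : ((N : ℝ) + 1)⁻¹ = 2 * (2 * (N : ℝ) + 1 + 1)⁻¹ := by field_simp; ring
    rw [h6]
    simp only [div_one]
    ring

/-- The antitonicity of `harmonic n - log n`, between the indices `N` and `2 * N + 1`. -/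
lemma one_sub_log_le_sum {N : ℕ} (hN : 0 < N) :
    1 - Real.log (2 + 1 / (N : ℝ)) ≤
      ∑ n ∈ Finset.range (2 * N), (-1 : ℝ) ^ n / ((n : ℝ) + 1 + 1 / 1) := by
  have h := Real.strictAnti_eulerMascheroniSeq'.antitone (show N ≤ 2 * N + 1 by lia)
  have hN' : (0 : ℝ) < N := by exact_mod_cast hN
  have hl : Real.log (2 + 1 / (N : ℝ)) = Real.log ((2 * N + 1 : ℕ) : ℝ) - Real.log N := by
    rw [← Real.log_div (by positivity) hN'.ne']
    congr 1
    push_cast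
    field_simp
  simp only [Real.eulerMascheroniSeq', hN.ne', if_false, Nat.succ_ne_zero] at h
  rw [sum_range_two_mul_eq_harmonic, hl]
  linarith


/-- **Monotonicity properties of the Hurwitz–Lerch function `H`.**
Let `H : ℝ → ℝ` satisfy `H(α) = Σ_{n≥0} (−1)ⁿ/(n + 1 + 1/α)` for all `α ∈ (0,1)`
(the conditionally convergent series formalized as the limit of partial sums).
Then `H` is differentiable on `(0,1)` with `0 < H′(α) < 1/(1+α)² < 1`, so
`G(α) = H(α) + ln 2 − α` is strictly decreasing on `(0,1)` and `G(α) > 0` there;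
equivalently `α < H(α) + ln 2` for all `0 < α < 1`. -/
theorem stmt15 (H : ℝ → ℝ)
    (hH : ∀ α ∈ Set.Ioo (0 : ℝ) 1,
      Filter.Tendsto
        (fun N => ∑ n ∈ Finset.range N, (-1 : ℝ) ^ n / ((n : ℝ) + 1 + 1 / α))
        Filter.atTop (nhds (H α))) :
    (∀ α ∈ Set.Ioo (0 : ℝ) 1,
        DifferentiableAt ℝ H α ∧
        0 < deriv H α ∧ deriv H α < 1 / (1 + α) ^ 2 ∧ 1 / (1 + α) ^ 2 < (1 : ℝ)) ∧
    StrictAntiOn (fun α => H α + Real.log 2 - α) (Set.Ioo (0 : ℝ) 1) ∧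
    ∀ α ∈ Set.Ioo (0 : ℝ) 1, α < H α + Real.log 2 := by
  have hderiv : ∀ α ∈ Set.Ioo (0 : ℝ) 1,
      DifferentiableAt ℝ H α ∧
      0 < deriv H α ∧ deriv H α < 1 / (1 + α) ^ 2 ∧ 1 / (1 + α) ^ 2 < (1 : ℝ) := by
    intro α hα
    have h := hasDerivAt_lerch hH hα
    refine ⟨h.differentiableAt, ?_, ?_, ?_⟩
    · rw [h.deriv]
      exact lerchDeriv_pos hα.1
    · rw [h.deriv]
      exact lerchDeriv_lt hα.1
    · have h0 := hα.1
      rw [div_lt_one (by positivity)]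
      nlinarith
  have hanti : StrictAntiOn (fun α => H α + Real.log 2 - α) (Set.Ioo (0 : ℝ) 1) := by
    have hG : ∀ x ∈ Set.Ioo (0 : ℝ) 1,
        HasDerivAt (fun α => H α + Real.log 2 - α) (deriv H x - 1) x := fun x hx =>
      (((hderiv x hx).1.hasDerivAt).add_const _).sub (hasDerivAt_id x)
    refine strictAntiOn_of_deriv_neg (convex_Ioo 0 1)
      (fun x hx => (hG x hx).continuousAt.continuousWithinAt) fun x hx => ?_
    rw [interior_Ioo] at hx
    rw [(hG x hx).deriv]
    linarith [(hderiv x hx).2.2.1, (hderiv x hx).2.2.2]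
  -- Even partial sums bound `H` from below.
  have hlow : ∀ β ∈ Set.Ioo (0 : ℝ) 1, ∀ N : ℕ,
      ∑ n ∈ Finset.range (2 * N), (-1 : ℝ) ^ n / ((n : ℝ) + 1 + 1 / β) ≤ H β := by
    intro β hβ N
    have hβ0 := hβ.1
    have hmono : Antitone fun n : ℕ => ((n : ℝ) + 1 + 1 / β)⁻¹ := by
      intro m n hmn
      dsimp only
      gcongr
    have ht := hH β hβ
    simp only [div_eq_mul_inv (_ ^ _)] at ht ⊢
    exact hmono.alternating_series_le_tendsto ht N
  -- Let `β → 1⁻` with `N` fixed.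
  have hone : ∀ α ∈ Set.Ioo (0 : ℝ) 1, ∀ N : ℕ,
      ∑ n ∈ Finset.range (2 * N), (-1 : ℝ) ^ n / ((n : ℝ) + 1 + 1 / 1) ≤ H α - α + 1 := by
    intro α hα N
    have hcont : Tendsto
        (fun β : ℝ => ∑ n ∈ Finset.range (2 * N), (-1 : ℝ) ^ n / ((n : ℝ) + 1 + 1 / β))
        (𝓝[<] 1) (𝓝 (∑ n ∈ Finset.range (2 * N), (-1 : ℝ) ^ n / ((n : ℝ) + 1 + 1 / 1))) :=
      tendsto_finsetSum _ fun n _ =>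
        ((hasDerivAt_lerch_term one_pos n).continuousAt.tendsto).mono_left nhdsWithin_le_nhds
    have hr : Tendsto (fun β : ℝ => H α - α + β) (𝓝[<] 1) (𝓝 (H α - α + 1)) :=
      (tendsto_const_nhds.add tendsto_id).mono_left nhdsWithin_le_nhds
    refine le_of_tendsto_of_tendsto hcont hr ?_
    filter_upwards [Ioo_mem_nhdsLT hα.2] with β hβ
    have hβ' : β ∈ Set.Ioo (0 : ℝ) 1 := ⟨hα.1.trans hβ.1, hβ.2⟩
    have h1 := hlow β hβ' N
    have h2 := hanti hα hβ' hβ.1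
    dsimp only at h2
    linarith
  have hnonneg : ∀ α ∈ Set.Ioo (0 : ℝ) 1, 0 ≤ H α + Real.log 2 - α := by
    intro α hα
    have hlim : Tendsto (fun N : ℕ => 1 - Real.log (2 + 1 / (N : ℝ))) atTop
        (𝓝 (1 - Real.log 2)) := by
      have h : Tendsto (fun N : ℕ => (2 : ℝ) + 1 / (N : ℝ)) atTop (𝓝 2) := by
        simpa using tendsto_one_div_atTop_nhds_zero_nat.const_add (2 : ℝ)
      exact (h.log two_ne_zero).const_sub 1
    have h := le_of_tendsto hlim (b := H α - α + 1) <| by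
      filter_upwards [eventually_gt_atTop 0] with N hN
      exact (one_sub_log_le_sum hN).trans (hone α hα N)
    linarith
  refine ⟨hderiv, hanti, fun α hα => ?_⟩
  obtain ⟨β, hαβ, hβ1⟩ := exists_between hα.2
  have hβ : β ∈ Set.Ioo (0 : ℝ) 1 := ⟨hα.1.trans hαβ, hβ1⟩
  have h1 := hnonneg β hβ
  have h2 := hanti hα hβ hαβ
  dsimp only at h2
  linarith
end

section
/- For every real r with 0 ≤ r < 1, the following power-series identities hold: Σ_{n=2}^∞ n³ r^n/(n(n−1)) = r((3 − 2r) r/(1 − r)² − ln(1 − r)) and Σ_{n=2}^∞ (n+1)³ r^n/(n(n−1)) = (r + 4r² − 4r³ + (1 − r)²(1 − 8r) ln(1 − r))/(1 − r)². -/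
/-!
Partial fractions in the exponent `N = n + 2` give
`N³ / (N (N - 1)) = (N + 1) + 1 / (N - 1)` and
`(N + 1)³ / (N (N - 1)) = (N + 4) + 8 / (N - 1) - 1 / N`,
so both series are combinations of `∑ rⁿ`, `∑ n rⁿ` and the logarithmic series
`∑ rⁿ⁺¹ / (n + 1) = -log (1 - r)`, the last one also with its first term removed.
-/


/-- **Power-series identities (cubic weights).** For `0 ≤ r < 1`:
`Σ_{n≥2} n³ rⁿ/(n(n−1)) = r((3 − 2r) r/(1 − r)² − ln(1 − r))` and
`Σ_{n≥2} (n+1)³ rⁿ/(n(n−1)) = (r + 4r² − 4r³ + (1 − r)²(1 − 8r) ln(1 − r))/(1 − r)²`. -/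
theorem stmt17 (r : ℝ) (hr0 : 0 ≤ r) (hr1 : r < 1) :
    (∑' n : ℕ, ((n : ℝ) + 2) ^ 3 * r ^ (n + 2) / (((n : ℝ) + 2) * ((n : ℝ) + 1)))
        = r * ((3 - 2 * r) * r / (1 - r) ^ 2 - Real.log (1 - r)) ∧
    (∑' n : ℕ, ((n : ℝ) + 3) ^ 3 * r ^ (n + 2) / (((n : ℝ) + 2) * ((n : ℝ) + 1)))
        = (r + 4 * r ^ 2 - 4 * r ^ 3 + (1 - r) ^ 2 * (1 - 8 * r) * Real.log (1 - r))
            / (1 - r) ^ 2 := by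
  have habs : |r| < 1 := by rwa [abs_of_nonneg hr0]
  have hgeo := hasSum_geometric_of_lt_one hr0 hr1
  have hmul : HasSum (fun n : ℕ => (n : ℝ) * r ^ n) (r / (1 - r) ^ 2) :=
    hasSum_coe_mul_geometric_of_norm_lt_one habs
  have hlog := Real.hasSum_pow_div_log_of_abs_lt_one habs
  have hlog' : HasSum (fun n : ℕ => r ^ (n + 2) / ((n : ℝ) + 2)) (-Real.log (1 - r) - r) := by
    have h := (hasSum_nat_add_iff' 1).mpr hlog
    convert! h using 1
    · funext n
      push_cast
      ring_nf
    · simp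
  have hne : 1 - r ≠ 0 := by linarith
  constructor
  · have h := ((hmul.add (hgeo.mul_left 3)).mul_left (r ^ 2)).add (hlog.mul_left r)
    convert h.tsum_eq using 1
    · congr 1
      funext n
      have h1 : (n : ℝ) + 1 ≠ 0 := by positivity
      have h2 : (n : ℝ) + 2 ≠ 0 := by positivity
      field_simp
      ring
    · field_simp
      ring
  · have h := (((hmul.add (hgeo.mul_left 6)).mul_left (r ^ 2)).add
      (hlog.mul_left (8 * r))).sub hlog'
    convert h.tsum_eq using 1
    · congr 1
      funext n
      have h1 : (n : ℝ) + 1 ≠ 0 := by positivity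
      have h2 : (n : ℝ) + 2 ≠ 0 := by positivity
      field_simp
      ring
    · field_simp
      ring
end

section
/- For every real r with 0 ≤ r < 1, the following power-series identities hold: Σ_{n=2}^∞ n² r^n/(n(n−1)) = r(r − (1 − r) ln(1 − r))/(1 − r) and Σ_{n=2}^∞ (n+1)² r^n/(n(n−1)) = (r + (1 − 5r + 4r²) ln(1 − r))/(1 − r). -/
/-!
Writing the exponent as `m = n + 2`, partial fractions give `m² / (m(m-1)) = 1 + 1/(m-1)` and
`(m+1)² / (m(m-1)) = 1 + 4/(m-1) - 1/m`. Both series are thus combinations of the geometric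
series `∑ r ^ m` and of two shifts of the Mercator series `∑ r ^ k / k = -log (1 - r)`; the closed
forms follow, using `1 - 5r + 4r² = (1 - r)(1 - 4r)` for the second.
-/

/-- **Power-series identities (quadratic weights).** For `0 ≤ r < 1`:
`Σ_{n≥2} n² rⁿ/(n(n−1)) = r(r − (1 − r) ln(1 − r))/(1 − r)` and
`Σ_{n≥2} (n+1)² rⁿ/(n(n−1)) = (r + (1 − 5r + 4r²) ln(1 − r))/(1 − r)`. -/
theorem stmt18 (r : ℝ) (hr0 : 0 ≤ r) (hr1 : r < 1) :
    (∑' n : ℕ, ((n : ℝ) + 2) ^ 2 * r ^ (n + 2) / (((n : ℝ) + 2) * ((n : ℝ) + 1)))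
        = r * (r - (1 - r) * Real.log (1 - r)) / (1 - r) ∧
    (∑' n : ℕ, ((n : ℝ) + 3) ^ 2 * r ^ (n + 2) / (((n : ℝ) + 2) * ((n : ℝ) + 1)))
        = (r + (1 - 5 * r + 4 * r ^ 2) * Real.log (1 - r)) / (1 - r) := by
  have hne : 1 - r ≠ 0 := by linarith
  have hgeom : HasSum (fun n : ℕ => r ^ 2 * r ^ n) (r ^ 2 * (1 - r)⁻¹) :=
    (hasSum_geometric_of_lt_one hr0 hr1).mul_left _
  have hlog : HasSum (fun n : ℕ => r ^ (n + 1) / ((n : ℝ) + 1)) (-Real.log (1 - r)) :=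
    Real.hasSum_pow_div_log_of_abs_lt_one (by rwa [abs_of_nonneg hr0])
  have htail : HasSum (fun n : ℕ => r ^ (n + 2) / ((n : ℝ) + 2)) (-Real.log (1 - r) - r) := by
    convert! (hasSum_nat_add_iff' 1).mpr hlog using 1
    · funext n
      push_cast
      ring
    · simp
  constructor
  · refine HasSum.tsum_eq ?_
    convert! hgeom.add (hlog.mul_left r) using 1
    · funext n
      have h1 : (n : ℝ) + 1 ≠ 0 := by positivity
      have h2 : (n : ℝ) + 2 ≠ 0 := by positivity
      field_simp
      ring
    · field_simp
      ring
  · refine HasSum.tsum_eq ?_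
    convert! (hgeom.add (hlog.mul_left (4 * r))).sub htail using 1
    · funext n
      have h1 : (n : ℝ) + 1 ≠ 0 := by positivity
      have h2 : (n : ℝ) + 2 ≠ 0 := by positivity
      field_simp
      ring
    · field_simp
      ring
end
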